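/- arXiv:2406.13660 — 6 statements merged into one kernel-verified Lean document; each statement's English description precedes it below -/
import Mathlib

section
/- Let X be a nonempty finite type, let p be a probability mass function on X with p(x) > 0 for every x, and let S ⊆ X be a set of negative examples with Z := Σ_{x ∉ S} p(x) > 0. Define q(x) := 𝟙[x ∉ S] · p(x) / Z. Then q is a probability mass function vanishing on S, and for every probability mass function r on X with r(x) = 0 for all x ∈ S, one has KL(r‖p) ≥ KL(q‖p). In other words, q attains the minimum of the reverse KL divergence to p over all distributions supported outside S. -/
open scoped Classical

/-- A probability mass function on a finite type: nonnegative and sums to 1. -/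
def IsPMF {X : Type*} [Fintype X] (p : X → ℝ) : Prop :=
  (∀ x, 0 ≤ p x) ∧ ∑ x, p x = 1

/-- Kullback–Leibler divergence with the convention `0 · log 0 = 0`
(`Real.log 0 = 0` in Mathlib, and terms with `q x = 0` vanish). -/
noncomputable def KL {X : Type*} [Fintype X] (q p : X → ℝ) : ℝ :=
  ∑ x, q x * Real.log (q x / p x)

/-- The pointwise form of the Gibbs inequality. -/
lemma sub_le_mul_log_div {a b : ℝ} (ha : 0 ≤ a) (hb : 0 < b) :
    a - b ≤ a * Real.log (a / b) := by
  rcases ha.eq_or_lt with rfl | ha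
  · simpa using hb.le
  · have h := mul_le_mul_of_nonneg_left (Real.one_sub_inv_le_log_of_pos (div_pos ha hb)) ha.le
    rwa [inv_div, mul_sub, mul_one, mul_div_cancel₀ b ha.ne'] at h

/-- The minimal targeted update `q` of `p` with respect to the negative set `S`
(i.e. `p` with the mass of `S` zeroed out and renormalized) is a pmf vanishing on `S`
and minimizes the reverse KL divergence to `p` among all pmfs vanishing on `S`. -/
theorem minimal_targeted_update_minimizes_KL
    {X : Type*} [Fintype X] [Nonempty X]
    (p : X → ℝ) (hpmf : IsPMF p) (hp : ∀ x, 0 < p x)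
    (S : Set X)
    (Z : ℝ) (hZ : Z = ∑ x ∈ Finset.univ.filter (fun x => x ∉ S), p x) (hZpos : 0 < Z)
    (q : X → ℝ) (hq : ∀ x, q x = if x ∈ S then 0 else p x / Z) :
    (IsPMF q ∧ ∀ x ∈ S, q x = 0) ∧
      ∀ r : X → ℝ, IsPMF r → (∀ x ∈ S, r x = 0) → KL q p ≤ KL r p := by
  have hq_nonneg : ∀ x, 0 ≤ q x := fun x => by
    rw [hq]
    split_ifs
    exacts [le_rfl, (div_pos (hp x) hZpos).le]
  have hq_sum : ∑ x, q x = 1 := by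
    calc ∑ x, q x = ∑ x, if x ∉ S then p x / Z else 0 :=
          Finset.sum_congr rfl fun x _ => by rw [hq, ite_not]
      _ = 1 := by rw [← Finset.sum_filter, ← Finset.sum_div, ← hZ, div_self hZpos.ne']
  have hq_zero : ∀ x ∈ S, q x = 0 := fun x hx => by rw [hq, if_pos hx]
  refine ⟨⟨⟨hq_nonneg, hq_sum⟩, hq_zero⟩, fun r ⟨hr_nonneg, hr_sum⟩ hr_zero => ?_⟩
  have hKL : KL q p = -Real.log Z := by
    calc KL q p = ∑ x, q x * -Real.log Z := by
          refine Finset.sum_congr rfl fun x _ => ?_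
          by_cases hx : x ∈ S
          · simp [hq_zero x hx]
          · rw [hq, if_neg hx, div_right_comm, div_self (hp x).ne', one_div, Real.log_inv]
      _ = -Real.log Z := by rw [← Finset.sum_mul, hq_sum, one_mul]
  calc KL q p = ∑ x, (r x - q x - r x * Real.log Z) := by
        rw [Finset.sum_sub_distrib, Finset.sum_sub_distrib, ← Finset.sum_mul, hr_sum, hq_sum, hKL]
        ring
    _ ≤ KL r p := by
        refine Finset.sum_le_sum fun x _ => ?_
        by_cases hx : x ∈ S
        · simp [hq_zero x hx, hr_zero x hx]
        rcases (hr_nonneg x).eq_or_lt with hr | hr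
        · simpa [← hr] using hq_nonneg x
        have h := sub_le_mul_log_div hr.le (div_pos (hp x) hZpos)
        rw [div_div_eq_mul_div, mul_div_right_comm,
          Real.log_mul (div_pos hr (hp x)).ne' hZpos.ne', mul_add] at h
        rw [hq, if_neg hx]
        linarith
end

section
/- Let X be a nonempty finite type, let p be a probability mass function on X with p(x) > 0 for every x, and let S ⊆ X with Z := Σ_{x ∉ S} p(x) > 0. Define q(x) := 𝟙[x ∉ S] · p(x) / Z. If r is a probability mass function on X with r(x) = 0 for all x ∈ S and KL(r‖p) = KL(q‖p), then r = q. Hence the minimizer of KL(·‖p) over pmfs vanishing on S is unique. -/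
open scoped Classical

/-- Equality case of the Gibbs inequality: a pmf with zero divergence from a pmf that dominates it
equals that pmf. -/
theorem IsPMF.eq_of_KL_eq_zero {X : Type*} [Fintype X] {r q : X → ℝ} (hr : IsPMF r)
    (hq : IsPMF q) (hac : ∀ x, q x = 0 → r x = 0) (hKL : KL r q = 0) : r = q := by
  have hterm : ∀ x, q x * InformationTheory.klFun (r x / q x)
      = r x * Real.log (r x / q x) + q x - r x := by
    intro x
    by_cases hx : q x = 0
    · simp [hx, hac x hx]
    · rw [InformationTheory.klFun_apply]
      field_simp
  have hnonneg : ∀ x ∈ Finset.univ, 0 ≤ q x * InformationTheory.klFun (r x / q x) := fun x _ =>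
    mul_nonneg (hq.1 x) (InformationTheory.klFun_nonneg (div_nonneg (hr.1 x) (hq.1 x)))
  have hsum : ∑ x, q x * InformationTheory.klFun (r x / q x) = 0 := by
    rw [KL] at hKL
    simp only [hterm, Finset.sum_sub_distrib, Finset.sum_add_distrib, hKL, hr.2, hq.2]
    norm_num
  funext x
  rcases mul_eq_zero.1 ((Finset.sum_eq_zero_iff_of_nonneg hnonneg).1 hsum x (Finset.mem_univ x))
    with hx | hx
  · rw [hx, hac x hx]
  · exact eq_of_div_eq_one
      ((InformationTheory.klFun_eq_zero_iff (div_nonneg (hr.1 x) (hq.1 x))).1 hx)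

/-- If `q` is `p` rescaled by `Z⁻¹` wherever `r` is nonzero, then the divergences of `r` from `p`
and from `q` differ by `log Z`. -/
theorem IsPMF.KL_eq_KL_sub_log {X : Type*} [Fintype X] {p q r : X → ℝ} {Z : ℝ} (hr : IsPMF r)
    (hp : ∀ x, p x ≠ 0) (hZ : Z ≠ 0) (hq : ∀ x, r x ≠ 0 → q x = p x / Z) :
    KL r p = KL r q - Real.log Z := by
  have hterm : ∀ x, r x * Real.log (r x / p x)
      = r x * Real.log (r x / q x) - r x * Real.log Z := by
    intro x
    by_cases hx : r x = 0
    · simp [hx]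
    · rw [hq x hx, Real.log_div hx (hp x), Real.log_div hx (div_ne_zero (hp x) hZ),
        Real.log_div (hp x) hZ]
      ring
  simp only [KL, hterm, Finset.sum_sub_distrib, ← Finset.sum_mul, hr.2, one_mul]

/-- Uniqueness: any pmf `r` vanishing on `S` whose reverse KL divergence to `p` equals that
of the minimal targeted update `q` must equal `q`. -/
theorem minimal_targeted_update_unique
    {X : Type*} [Fintype X] [Nonempty X]
    (p : X → ℝ) (hpmf : IsPMF p) (hp : ∀ x, 0 < p x)
    (S : Set X)
    (Z : ℝ) (hZ : Z = ∑ x ∈ Finset.univ.filter (fun x => x ∉ S), p x) (hZpos : 0 < Z)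
    (q : X → ℝ) (hq : ∀ x, q x = if x ∈ S then 0 else p x / Z) :
    ∀ r : X → ℝ, IsPMF r → (∀ x ∈ S, r x = 0) → KL r p = KL q p → r = q := by
  intro r hr hrS hKL
  have hqS : ∀ x ∉ S, q x = p x / Z := fun x hx => by rw [hq x, if_neg hx]
  have hqpmf : IsPMF q := by
    refine ⟨fun x => ?_, ?_⟩
    · rw [hq x]
      split_ifs
      · exact le_rfl
      · exact (div_pos (hp x) hZpos).le
    · have hsum : ∑ x, q x = (∑ x ∈ Finset.univ.filter (fun x => x ∉ S), p x) / Z := by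
        rw [Finset.sum_div, Finset.sum_filter]
        exact Finset.sum_congr rfl fun x _ => by rw [hq x, ite_not]
      rw [hsum, ← hZ, div_self hZpos.ne']
  have hpne : ∀ x, p x ≠ 0 := fun x => (hp x).ne'
  have hrp := hr.KL_eq_KL_sub_log hpne hZpos.ne' fun x hx => hqS x fun hS => hx (hrS x hS)
  have hqp := hqpmf.KL_eq_KL_sub_log hpne hZpos.ne' fun x hx =>
    hqS x fun hS => hx (by rw [hq x, if_pos hS])
  have hqq : KL q q = 0 := Finset.sum_eq_zero fun x _ => by
    by_cases hx : q x = 0 <;> simp [hx]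
  refine hr.eq_of_KL_eq_zero hqpmf (fun x hx => ?_) (by linarith)
  by_contra hrx
  have hS : x ∉ S := fun hS => hrx (hrS x hS)
  exact (div_pos (hp x) hZpos).ne' (hqS x hS ▸ hx)
end

section
/- Let X be a finite type, let p_neg be a probability mass function on X with support S := {x : p_neg(x) > 0}, and suppose there exists x₀ ∈ X with x₀ ∉ S. Then the negative likelihood objective is unbounded below over strictly positive pmfs: for every M ∈ ℝ there exists a probability mass function q on X with q(x) > 0 for all x ∈ X such that Σ_{x} p_neg(x) · log q(x) < M. -/
/-- The negative likelihood objective is unbounded below over strictly positive pmfs: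
if some `x₀` lies outside the support `S = {x | 0 < p_neg x}`, then for every `M` there is a
strictly positive pmf `q` with `Σ_x p_neg(x) · log q(x) < M`. -/
theorem negative_likelihood_unbounded_below
    {X : Type*} [Fintype X]
    (pneg : X → ℝ) (hpneg : IsPMF pneg)
    (hx₀ : ∃ x₀ : X, x₀ ∉ {x | 0 < pneg x}) :
    ∀ M : ℝ, ∃ q : X → ℝ,
      (∀ x, 0 < q x) ∧ (∑ x, q x = 1) ∧ ∑ x, pneg x * Real.log (q x) < M := by
  classical
  intro M
  obtain ⟨x₀, hx₀⟩ := hx₀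
  have hp₀ : pneg x₀ = 0 := le_antisymm (not_lt.mp hx₀) (hpneg.1 x₀)
  let w : X → ℝ := fun x => if x = x₀ then Real.exp (1 - M) else 1
  have hw : ∀ x, 0 < w x := fun x => by
    dsimp only [w]
    split_ifs <;> positivity
  have hZ : Real.exp (1 - M) ≤ ∑ x, w x := by
    simpa [w] using Finset.single_le_sum (fun x _ => (hw x).le) (Finset.mem_univ x₀)
  have hZpos : 0 < ∑ x, w x := (Real.exp_pos _).trans_le hZ
  have hlogZ : 1 - M ≤ Real.log (∑ x, w x) := (Real.le_log_iff_exp_le hZpos).mpr hZ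
  refine ⟨fun x => w x / ∑ y, w y, fun x => div_pos (hw x) hZpos, ?_, ?_⟩
  · rw [← Finset.sum_div, div_self hZpos.ne']
  · calc ∑ x, pneg x * Real.log (w x / ∑ y, w y)
        ≤ ∑ x, pneg x * (M - 1) := by
          refine Finset.sum_le_sum fun x _ => ?_
          by_cases hx : x = x₀
          · simp [hx, hp₀]
          · have hwx : w x = 1 := if_neg hx
            refine mul_le_mul_of_nonneg_left ?_ (hpneg.1 x)
            rw [hwx, one_div, Real.log_inv]
            linarith
      _ = M - 1 := by rw [← Finset.sum_mul, hpneg.2, one_mul]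
      _ < M := sub_one_lt M
end

section
/- Let X be a nonempty finite type, let p be a probability mass function on X with p(x) > 0 for every x, let r : X → ℝ be a reward function, and let β > 0. Define Z := Σ_x p(x)·exp(r(x)/β) and p_new(x) := p(x)·exp(r(x)/β)/Z. Then for every probability mass function q on X, the KL-regularized expected reward satisfies Σ_x q(x)·r(x) − β·KL(q‖p) = β·log Z − β·KL(q‖p_new). -/
/-- KL-regularized reward identity: with `p_new ∝ p · exp(r/β)`, for every pmf `q` one has
`Σ_x q(x)·r(x) − β·KL(q‖p) = β·log Z − β·KL(q‖p_new)`. -/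
theorem kl_regularized_reward_identity
    {X : Type*} [Fintype X] [Nonempty X]
    (p : X → ℝ) (hpmf : IsPMF p) (hp : ∀ x, 0 < p x)
    (r : X → ℝ) (β : ℝ) (hβ : 0 < β)
    (Z : ℝ) (hZ : Z = ∑ x, p x * Real.exp (r x / β))
    (pnew : X → ℝ) (hpnew : ∀ x, pnew x = p x * Real.exp (r x / β) / Z) :
    ∀ q : X → ℝ, IsPMF q →
      ∑ x, q x * r x - β * KL q p = β * Real.log Z - β * KL q pnew := by
  intro q hq
  have hZpos : 0 < Z :=
    hZ ▸ Finset.sum_pos (fun x _ => mul_pos (hp x) (Real.exp_pos _)) Finset.univ_nonempty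
  have hterm : ∀ x, q x * r x - β * (q x * Real.log (q x / p x)) =
      q x * (β * Real.log Z) - β * (q x * Real.log (q x / pnew x)) := by
    intro x
    rcases (hq.1 x).eq_or_lt with hqx | hqx
    · simp [← hqx]
    · have hexp := Real.exp_pos (r x / β)
      have hnum := mul_pos (hp x) hexp
      rw [hpnew x, Real.log_div hqx.ne' (hp x).ne',
        Real.log_div hqx.ne' (div_pos hnum hZpos).ne', Real.log_div hnum.ne' hZpos.ne',
        Real.log_mul (hp x).ne' hexp.ne', Real.log_exp]
      field_simp
      ring
  calc ∑ x, q x * r x - β * KL q p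
      = ∑ x, (q x * r x - β * (q x * Real.log (q x / p x))) := by
        rw [KL, Finset.mul_sum, Finset.sum_sub_distrib]
    _ = ∑ x, (q x * (β * Real.log Z) - β * (q x * Real.log (q x / pnew x))) :=
        Finset.sum_congr rfl fun x _ => hterm x
    _ = β * Real.log Z - β * KL q pnew := by
        rw [Finset.sum_sub_distrib, ← Finset.sum_mul, hq.2, one_mul, KL, Finset.mul_sum]
end

section
/- Let X be a nonempty finite type, let p be a probability mass function on X with p(x) > 0 for every x, let r : X → ℝ be a reward function, and let β > 0. Define Z := Σ_x p(x)·exp(r(x)/β) and p_new(x) := p(x)·exp(r(x)/β)/Z. Then p_new is the unique maximizer over probability mass functions q on X of the objective Σ_x q(x)·r(x) − β·KL(q‖p): for every pmf q one has Σ_x q(x)·r(x) − β·KL(q‖p) ≤ Σ_x p_new(x)·r(x) − β·KL(p_new‖p), with equality if and only if q = p_new. -/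
open InformationTheory in
theorem KL_eq_sum_klFun {X : Type*} [Fintype X] {q p : X → ℝ} (hq : IsPMF q) (hp : IsPMF p)
    (hpos : ∀ x, 0 < p x) : KL q p = ∑ x, p x * klFun (q x / p x) := by
  have h : ∀ x, p x * klFun (q x / p x) = q x * Real.log (q x / p x) + p x - q x := fun x => by
    have := (hpos x).ne'
    rw [klFun_apply]
    field_simp
  simp only [h, Finset.sum_sub_distrib, Finset.sum_add_distrib, hq.2, hp.2, KL]
  ring

/-- The Gibbs inequality. -/
theorem KL_nonneg {X : Type*} [Fintype X] {q p : X → ℝ} (hq : IsPMF q) (hp : IsPMF p)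
    (hpos : ∀ x, 0 < p x) : 0 ≤ KL q p := by
  rw [KL_eq_sum_klFun hq hp hpos]
  exact Finset.sum_nonneg fun x _ =>
    mul_nonneg (hp.1 x) (InformationTheory.klFun_nonneg (div_nonneg (hq.1 x) (hp.1 x)))

open InformationTheory in
theorem KL_eq_zero_iff {X : Type*} [Fintype X] {q p : X → ℝ} (hq : IsPMF q) (hp : IsPMF p)
    (hpos : ∀ x, 0 < p x) : KL q p = 0 ↔ q = p := by
  have hdiv : ∀ x, 0 ≤ q x / p x := fun x => div_nonneg (hq.1 x) (hp.1 x)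
  rw [KL_eq_sum_klFun hq hp hpos, Finset.sum_eq_zero_iff_of_nonneg fun x _ =>
    mul_nonneg (hp.1 x) (klFun_nonneg (hdiv x)), funext_iff]
  refine ⟨fun h x => ?_, fun h x _ => ?_⟩
  · have hx := (mul_eq_zero.mp (h x (Finset.mem_univ x))).resolve_left (hpos x).ne'
    exact (div_eq_one_iff_eq (hpos x).ne').mp ((klFun_eq_zero_iff (hdiv x)).mp hx)
  · rw [h x, div_self (hpos x).ne', klFun_one, mul_zero]

/-- The KL-regularized reward of `q` is, up to the constant `β log Z`, minus `β` times its divergence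
from the exponential tilting of `p`. -/
theorem sum_mul_sub_KL_eq {X : Type*} [Fintype X] {q p r pnew : X → ℝ} {β Z : ℝ} (hq : IsPMF q)
    (hp : ∀ x, 0 < p x) (hβ : β ≠ 0) (hZ : 0 < Z)
    (hpnew : ∀ x, pnew x = p x * Real.exp (r x / β) / Z) :
    ∑ x, q x * r x - β * KL q p = β * Real.log Z - β * KL q pnew := by
  have h : ∀ x, q x * r x - β * (q x * Real.log (q x / p x)) =
      q x * (β * Real.log Z) - β * (q x * Real.log (q x / pnew x)) := fun x => by
    rcases (hq.1 x).eq_or_lt with h0 | h0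
    · simp [← h0]
    · have hpx := (hp x).ne'
      have hexp := (Real.exp_pos (r x / β)).ne'
      rw [hpnew x, Real.log_div h0.ne' hpx,
        Real.log_div h0.ne' (div_ne_zero (mul_ne_zero hpx hexp) hZ.ne'),
        Real.log_div (mul_ne_zero hpx hexp) hZ.ne', Real.log_mul hpx hexp, Real.log_exp]
      field_simp
      ring
  have hsum := Finset.sum_congr rfl fun x (_ : x ∈ Finset.univ) => h x
  rw [Finset.sum_sub_distrib, Finset.sum_sub_distrib, ← Finset.sum_mul, hq.2, one_mul,
    ← Finset.mul_sum, ← Finset.mul_sum] at hsum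
  exact hsum

/-- `p_new ∝ p · exp(r/β)` is the unique maximizer of the KL-regularized expected reward
`Σ_x q(x)·r(x) − β·KL(q‖p)` over pmfs `q`. -/
theorem kl_regularized_reward_unique_maximizer
    {X : Type*} [Fintype X] [Nonempty X]
    (p : X → ℝ) (hpmf : IsPMF p) (hp : ∀ x, 0 < p x)
    (r : X → ℝ) (β : ℝ) (hβ : 0 < β)
    (Z : ℝ) (hZ : Z = ∑ x, p x * Real.exp (r x / β))
    (pnew : X → ℝ) (hpnew : ∀ x, pnew x = p x * Real.exp (r x / β) / Z) :
    ∀ q : X → ℝ, IsPMF q →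
      (∑ x, q x * r x - β * KL q p ≤ ∑ x, pnew x * r x - β * KL pnew p) ∧
      (∑ x, q x * r x - β * KL q p = ∑ x, pnew x * r x - β * KL pnew p ↔ q = pnew) := by
  have hZpos : 0 < Z := hZ ▸ Finset.sum_pos
    (fun x _ => mul_pos (hp x) (Real.exp_pos _)) Finset.univ_nonempty
  have hpos : ∀ x, 0 < pnew x := fun x =>
    hpnew x ▸ div_pos (mul_pos (hp x) (Real.exp_pos _)) hZpos
  have hnew : IsPMF pnew := ⟨fun x => (hpos x).le, by
    simp only [hpnew, ← Finset.sum_div, ← hZ, div_self hZpos.ne']⟩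
  intro q hq
  rw [sum_mul_sub_KL_eq hq hp hβ.ne' hZpos hpnew, sum_mul_sub_KL_eq hnew hp hβ.ne' hZpos hpnew,
    (KL_eq_zero_iff hnew hnew hpos).mpr rfl, ← KL_eq_zero_iff hq hnew hpos]
  refine ⟨?_, ?_⟩
  · have := mul_nonneg hβ.le (KL_nonneg hq hnew hpos)
    linarith
  · simp [hβ.ne']
end

section
/- Let X be a nonempty finite type, let p be a probability mass function on X with p(x) > 0 for every x, and let S ⊆ X with p(Sᶜ) := Σ_{x ∉ S} p(x) > 0. Let r : X → ℝ be the constraint-indicator reward, r(x) = 1 if x ∉ S and r(x) = 0 if x ∈ S. For β > 0, define Z_β := Σ_x p(x)·exp(r(x)/β) and p_β(x) := p(x)·exp(r(x)/β)/Z_β. Then for every x ∈ X, p_β(x) → 𝟙[x ∉ S]·p(x)/p(Sᶜ) as β → 0⁺; that is, the KL-regularized reward-maximizing distribution converges pointwise to the minimal targeted update of p with respect to S as the regularization strength β tends to zero. -/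
open scoped Classical

/-- For the indicator reward `r = 𝟙[· ∉ S]`, the shifted weight `exp ((r - 1) / β)` tends to
`𝟙[· ∉ S]` as `β → 0⁺`. -/
theorem tendsto_exp_indicator_sub_one_div {X : Type*} (S : Set X) (r : X → ℝ)
    (hr : ∀ x, r x = if x ∈ S then 0 else 1) (x : X) :
    Filter.Tendsto (fun β : ℝ => Real.exp ((r x - 1) / β)) (nhdsWithin 0 (Set.Ioi 0))
      (nhds (if x ∈ S then 0 else 1)) := by
  by_cases hx : x ∈ S
  · simpa [hr, hx, neg_div] using tendsto_inv_nhdsGT_zero (𝕜 := ℝ)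
  · simp [hr, hx]

/-- With the constraint-indicator reward `r = 𝟙[· ∉ S]`, the KL-regularized reward-maximizing
distribution `p_β ∝ p · exp(r/β)` converges pointwise, as `β → 0⁺`, to the minimal targeted
update `𝟙[x ∉ S] · p(x) / p(Sᶜ)` of `p` with respect to `S`. -/
theorem kl_regularized_optimum_tendsto_minimal_targeted_update
    {X : Type*} [Fintype X] [Nonempty X]
    (p : X → ℝ) (hpmf : IsPMF p) (hp : ∀ x, 0 < p x)
    (S : Set X)
    (hZ : 0 < ∑ x ∈ Finset.univ.filter (fun x => x ∉ S), p x)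
    (r : X → ℝ) (hr : ∀ x, r x = if x ∈ S then 0 else 1) :
    ∀ x : X,
      Filter.Tendsto
        (fun β : ℝ => p x * Real.exp (r x / β) / ∑ y, p y * Real.exp (r y / β))
        (nhdsWithin 0 (Set.Ioi 0))
        (nhds (if x ∈ S then 0
               else p x / ∑ y ∈ Finset.univ.filter (fun y => y ∉ S), p y)) := by
  intro x
  have hterm (y : X) :=
    (tendsto_exp_indicator_sub_one_div S r hr y).const_mul (p y)
  have hsum : ∑ y, p y * (if y ∈ S then (0 : ℝ) else 1) =
      ∑ y ∈ Finset.univ.filter (fun y => y ∉ S), p y := by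
    rw [Finset.sum_filter]
    exact Finset.sum_congr rfl fun y _ => by by_cases hy : y ∈ S <;> simp [hy]
  have hden := tendsto_finsetSum Finset.univ fun y _ => hterm y
  rw [hsum] at hden
  -- Multiplying numerator and denominator by `exp (-1 / β)` replaces `r` by `r - 1`.
  have hscale (β : ℝ) (y : X) : p y * Real.exp ((r y - 1) / β) =
      p y * Real.exp (r y / β) * Real.exp (-(1 / β)) := by
    rw [mul_assoc, ← Real.exp_add]
    ring_nf
  have hlim := (hterm x).div hden hZ.ne'
  convert hlim using 2 with β
  · simp only [Pi.div_apply, hscale, ← Finset.sum_mul]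
    rw [mul_div_mul_right _ _ (Real.exp_ne_zero _)]
  · split_ifs <;> simp
end
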